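/- Let U be a consistent c.e. theory and 𝒳 a set of sentences. Then U is strongly doubly 𝒳-generative if and only if U is effectively essentially hereditarily 𝒳-creative. -/

import Mathlib

open FirstOrder FirstOrder.Language

namespace PourEl

/-! ## Recursion-theoretic notions -/

/-- The `i`-th computably enumerable subset of `ℕ` (the domain of the `i`-th
partial computable function). -/
def WSet (i : ℕ) : Set ℕ :=
  {n | ((Denumerable.ofNat Nat.Partrec.Code i).eval n).Dom}

/-- A set of natural numbers is computably enumerable. -/
def CE (A : Set ℕ) : Prop := ∃ i, A = WSet i

/-- A set of natural numbers is computable. -/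
def Comp (A : Set ℕ) : Prop := ComputablePred (· ∈ A)

/-- Disjoint sets `X`, `Y` are computably separable iff some computable set
contains `X` and is disjoint from `Y`. -/
def CompSeparable (X Y : Set ℕ) : Prop :=
  ∃ Z : Set ℕ, Comp Z ∧ X ⊆ Z ∧ Y ∩ Z = ∅

/-- Computable inseparability. -/
def CompInseparable (X Y : Set ℕ) : Prop := ¬ CompSeparable X Y

/-- `Z` and `W` weakly biseparate `X` and `Y`. -/
def WeaklyBiseparate {α : Type*} (Z W X Y : Set α) : Prop :=
  X ⊆ Z ∧ Y ⊆ W ∧ Z ∩ Y = ∅ ∧ W ∩ X = ∅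

/-- `Z` and `W` biseparate `X` and `Y`. -/
def Biseparate {α : Type*} (Z W X Y : Set α) : Prop :=
  WeaklyBiseparate Z W X Y ∧ Z ∩ W = ∅

/-! ## Logical notions -/

variable {L : FirstOrder.Language}

/-- Provability: `φ` is a first-order consequence of `U` (by Gödel completeness,
semantic consequence). -/
def Prv (U : L.Theory) (φ : L.Sentence) : Prop := U ⊨ᵇ φ

/-- `U_p`: the set of theorems of `U`. -/
def Thms (U : L.Theory) : Set L.Sentence := {φ | Prv U φ}

/-- `U_r`: the set of refutable sentences of `U`. -/
def Refut (U : L.Theory) : Set L.Sentence := {φ | Prv U ∼φ}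

/-- Consistency: `U ⊬ ⊥`. -/
def Consistent (U : L.Theory) : Prop := ¬ Prv U ⊥

/-- `φ` is independent of `U`: `U` proves neither `φ` nor `¬φ`. -/
def Independent (U : L.Theory) (φ : L.Sentence) : Prop := ¬ Prv U φ ∧ ¬ Prv U ∼φ

/-- `U` is incomplete: some sentence is independent of it. -/
def Incomplete (U : L.Theory) : Prop := ∃ φ, Independent U φ

/-- Mono-consequence: `U ⊢_m φ` iff `ψ ⊢ φ` for some `ψ ∈ U`. -/
def MPrv (U : L.Theory) (φ : L.Sentence) : Prop := ∃ ψ ∈ U, Prv {ψ} φ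

/-- `U_m`: the set of mono-theorems of `U`. -/
def MThms (U : L.Theory) : Set L.Sentence := {φ | MPrv U φ}

/-- `U_n`: the set of mono-refutable sentences of `U`. -/
def MRefut (U : L.Theory) : Set L.Sentence := {φ | MPrv U ∼φ}

/-- Mono-consistency: every member is consistent by itself. -/
def MonoConsistent (U : L.Theory) : Prop := ∀ ψ ∈ U, Consistent ({ψ} : L.Theory)

/-- `Û`: the set of all non-empty finite conjunctions of elements of `U`. -/
def hat (U : L.Theory) : L.Theory :=
  {φ | ∃ (ψ : L.Sentence) (l : List L.Sentence),
    ψ ∈ U ∧ (∀ χ ∈ l, χ ∈ U) ∧ φ = l.foldl (· ⊓ ·) ψ}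

/-- `U ⋓ V`. -/
def Cup (U V : L.Theory) : L.Theory :=
  {χ | ∃ φ ∈ U, ∃ ψ ∈ V, χ = φ ⊓ ψ}

/-- `U ⋐ V`: for every `φ ∈ U` and `ψ ∈ V` there is `ρ ∈ V` with `ρ ⊢ φ ∧ ψ`. -/
def Ssub (U V : L.Theory) : Prop :=
  ∀ φ ∈ U, ∀ ψ ∈ V, ∃ ρ ∈ V, Prv {ρ} (φ ⊓ ψ)

/-! ## Gödel numbering -/

/-- A Gödel numbering of the sentences of a (countable) signature: a bijective
coding of sentences by natural numbers that is effective for the basic syntactic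
operations, and for which the theorems of a c.e. theory can be effectively
enumerated from an index of the theory. -/
structure Numbering (L : FirstOrder.Language) where
  equiv : L.Sentence ≃ ℕ
  neg_comp : Computable fun n => equiv ∼(equiv.symm n)
  inf_comp : Computable₂ fun m n => equiv (equiv.symm m ⊓ equiv.symm n)
  imp_comp : Computable₂ fun m n => equiv (equiv.symm m ⟹ equiv.symm n)
  iff_comp : Computable₂ fun m n => equiv (equiv.symm m ⇔ equiv.symm n)
  thmIdx : ℕ → ℕ
  thmIdx_comp : Computable thmIdx
  thmIdx_spec : ∀ i, WSet (thmIdx i) = equiv '' Thms (equiv.symm '' WSet i)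

namespace Numbering

variable (g : Numbering L)

/-- The code of a sentence. -/
def code (φ : L.Sentence) : ℕ := g.equiv φ

/-- The set of codes of a set of sentences. -/
def codes (S : Set L.Sentence) : Set ℕ := g.equiv '' S

/-- The theory axiomatised by the `i`-th c.e. set (identified with a set of
sentences via the numbering). -/
def thy (i : ℕ) : L.Theory := g.equiv.symm '' WSet i

/-- The theory `U` is computably enumerable (with respect to the numbering). -/
def CEThy (U : L.Theory) : Prop := CE (g.codes U)

end Numbering


/-- `U` is effectively essentially hereditarily `X`-creative. -/
def EffEssHerXCreative (g : Numbering L) (U : L.Theory) (X : Set L.Sentence) : Prop :=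
  ∃ Φ : ℕ × ℕ × ℕ →. ℕ, Partrec Φ ∧ ∀ i j k,
    Thms U ⊆ Thms (g.thy k) → Consistent (g.thy k) →
    Thms (g.thy i) ⊆ Thms (g.thy k) →
    g.codes (Thms (g.thy i)) ∩ WSet j = ∅ →
    ∃ n ∈ Φ (i, j, k), n ∈ g.codes X ∧ n ∉ g.codes (Thms (g.thy i)) ∪ WSet j

/-- `U` is strongly doubly `X`-generative. -/
def StrongDoublyXGenerative (g : Numbering L) (U : L.Theory) (X : Set L.Sentence) : Prop :=
  ∃ Φ : ℕ → ℕ → ℕ, Computable₂ Φ ∧ ∀ i j, WSet i ∩ WSet j = ∅ →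
    (Φ i j ∈ g.codes (Thms (∅ : L.Theory)) ↔ Φ i j ∈ WSet j) ∧
    (Φ i j ∈ g.codes (Refut U) ↔ Φ i j ∈ WSet i) ∧
    (Φ i j ∉ WSet i ∪ WSet j → Φ i j ∈ g.codes X)

/-! ## Helper lemmas -/

section Helpers

open Nat.Partrec (Code)
open Encodable

theorem smn_aux {α : Type*} [Primcodable α] {f : α → ℕ →. ℕ} (hf : Partrec₂ f) :
    ∃ s : α → ℕ, Computable s ∧ ∀ a, WSet (s a) = {m | (f a m).Dom} := by
  obtain ⟨c, hc⟩ := Code.exists_code.1 hf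
  refine ⟨fun a => encode (Code.curry c (encode a)), ?_, ?_⟩
  · exact Computable.encode.comp
      ((Code.primrec₂_curry.comp (Primrec.const c) Primrec.encode).to_comp)
  · intro a
    ext m
    have : encode ((a, m) : α × ℕ) = Nat.pair (encode a) m := rfl
    simp only [WSet, Set.mem_ofPred_eq, Denumerable.ofNat_encode, Code.eval_curry, hc]
    rw [← this, encodek]
    simp

theorem eval_ofNat_partrec {α : Type*} [Primcodable α] {i m : α → ℕ}
    (hi : Computable i) (hm : Computable m) :
    Partrec fun a => (Denumerable.ofNat Code (i a)).eval (m a) :=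
  Code.eval_part.comp ((Computable.ofNat Code).comp hi) hm

/-- Semidecides `m ∈ W_w` and `m` is the output of `c` on `x`. -/
def qq (a : Code × ℕ × ℕ) (m : ℕ) : Part ℕ :=
  (Code.eval a.1 a.2.1).bind fun n =>
    cond (decide (n = m)) ((Denumerable.ofNat Code a.2.2).eval m) Part.none

theorem qq_partrec : Partrec₂ qq := by
  unfold Partrec₂ qq
  refine Partrec.bind (Code.eval_part.comp (Computable.fst.comp Computable.fst)
    (Computable.fst.comp (Computable.snd.comp Computable.fst))) ?_
  refine Partrec.cond ?_ (eval_ofNat_partrec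
    (Computable.snd.comp (Computable.snd.comp (Computable.fst.comp Computable.fst)))
    (Computable.snd.comp Computable.fst)) Partrec.none
  have := (Primrec.eq (α := ℕ)).decide.to_comp
  exact this.comp Computable.snd (Computable.snd.comp Computable.fst)

theorem qq_dom (a : Code × ℕ × ℕ) (m : ℕ) :
    (qq a m).Dom ↔ m ∈ Code.eval a.1 a.2.1 ∧ m ∈ WSet a.2.2 := by
  rw [Part.dom_iff_mem]
  simp only [qq, Part.mem_bind_iff, WSet, Set.mem_ofPred_eq]
  constructor
  · rintro ⟨y, n, hn, hy⟩
    by_cases h : n = m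
    · subst h
      simp at hy
      exact ⟨hn, Part.dom_iff_mem.2 ⟨y, hy⟩⟩
    · simp [h] at hy
  · rintro ⟨h1, h2⟩
    obtain ⟨y, hy⟩ := Part.dom_iff_mem.1 h2
    exact ⟨y, m, h1, by simpa using hy⟩

theorem smn_q : ∃ s : Code × ℕ × ℕ → ℕ, Computable s ∧
    ∀ c x w, WSet (s (c, x, w)) = {m | m ∈ Code.eval c x ∧ m ∈ WSet w} := by
  obtain ⟨s, hs, h⟩ := smn_aux qq_partrec
  refine ⟨s, hs, fun c x w => ?_⟩
  rw [h]
  ext m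
  exact qq_dom _ _

theorem smn_union (v : ℕ) : ∃ s : ℕ → ℕ, Computable s ∧
    ∀ w, WSet (s w) = WSet v ∪ WSet w := by
  obtain ⟨k, hk, h⟩ := Partrec.merge'
    (eval_ofNat_partrec (α := ℕ × ℕ) (Computable.const v) Computable.snd)
    (eval_ofNat_partrec (α := ℕ × ℕ) Computable.fst Computable.snd)
  obtain ⟨s, hs, h'⟩ := smn_aux (f := fun w m => k (w, m)) hk
  refine ⟨s, hs, fun w => ?_⟩
  rw [h']
  ext m
  exact (h (w, m)).2

theorem ce_preimage {f : ℕ → ℕ} (hf : Computable f) (v : ℕ) :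
    ∃ r, WSet r = f ⁻¹' WSet v := by
  obtain ⟨s, hs, h⟩ := smn_aux (α := ℕ) (f := fun _ m => (Denumerable.ofNat Code v).eval (f m))
    (eval_ofNat_partrec (Computable.const v) (hf.comp Computable.snd))
  exact ⟨s 0, by rw [h]; rfl⟩

variable {L : FirstOrder.Language}

theorem Prv.mono {T T' : L.Theory} (h : ∀ ψ ∈ T, Prv T' ψ) {φ : L.Sentence} (hφ : Prv T φ) :
    Prv T' φ := by
  unfold Prv at *
  rw [Theory.models_sentence_iff] at hφ ⊢
  intro M
  have : M ⊨ T := ⟨fun ψ hψ => Theory.models_sentence_iff.1 (h ψ hψ) M⟩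
  exact hφ (Theory.ModelType.of T M)

theorem prv_mem {T : L.Theory} {φ : L.Sentence} (h : φ ∈ T) : Prv T φ :=
  Theory.models_sentence_of_mem h

theorem prv_bot {T : L.Theory} {φ : L.Sentence} (h : Prv T φ) (h' : Prv T ∼φ) : Prv T ⊥ := by
  unfold Prv at *
  rw [Theory.models_sentence_iff] at *
  intro M
  exact absurd (h M) ((Sentence.realize_not _).1 (h' M))

theorem prv_not {T T' : L.Theory} {φ : L.Sentence} (h : Prv T' ⊥)
    (hT : ∀ ψ ∈ T', ψ ∈ T ∨ ψ = φ) : Prv T ∼φ := by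
  unfold Prv at *
  rw [Theory.models_sentence_iff] at *
  intro M
  refine (Sentence.realize_not _).2 fun hM => ?_
  have : M ⊨ T' := ⟨fun ψ hψ => by
    rcases hT ψ hψ with h1 | h1
    · exact Theory.realize_sentence_of_mem T h1
    · exact h1 ▸ hM⟩
  exact h (Theory.ModelType.of T' M)

theorem mem_codes (g : Numbering L) {S : Set L.Sentence} {n : ℕ} :
    n ∈ g.codes S ↔ g.equiv.symm n ∈ S := by
  constructor
  · rintro ⟨φ, h, rfl⟩; simpa using h
  · intro h; exact ⟨_, h, by simp⟩

theorem mem_thy (g : Numbering L) {i : ℕ} {φ : L.Sentence} :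
    φ ∈ g.thy i ↔ g.equiv φ ∈ WSet i := by
  constructor
  · rintro ⟨n, h, rfl⟩; simpa using h
  · intro h; exact ⟨_, h, by simp⟩

theorem gen_to_creative (g : Numbering L) (U : L.Theory) (X : Set L.Sentence)
    (h : StrongDoublyXGenerative g U X) : EffEssHerXCreative g U X := by
  obtain ⟨Φ, hΦ, H⟩ := h
  refine ⟨fun p => Part.some (Φ (g.thmIdx p.1) p.2.1), ?_, ?_⟩
  · exact (hΦ.comp (g.thmIdx_comp.comp Computable.fst)
      (Computable.fst.comp Computable.snd)).partrec
  · intro i j k hk hc hik hij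
    have e : WSet (g.thmIdx i) = g.codes (Thms (g.thy i)) := g.thmIdx_spec i
    obtain ⟨h1, h2, h3⟩ := H (g.thmIdx i) j (by rw [e]; exact hij)
    rw [e] at h2 h3
    have hn : Φ (g.thmIdx i) j ∉ g.codes (Thms (g.thy i)) ∪ WSet j := by
      rintro (hn | hn)
      · have a := mem_codes g |>.1 (h2.2 hn)
        exact hc (prv_bot (hik (mem_codes g |>.1 hn)) (hk a))
      · have a := mem_codes g |>.1 (h1.2 hn)
        have b : Φ (g.thmIdx i) j ∈ g.codes (Thms (g.thy i)) :=
          mem_codes g |>.2 (Prv.mono (by simp) a)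
        exact Set.eq_empty_iff_forall_notMem.1 hij _ ⟨b, hn⟩
    exact ⟨_, Part.mem_some _, h3 hn, hn⟩

theorem creative_to_gen (g : Numbering L) (U : L.Theory)
    (hU : g.CEThy U) (hcon : Consistent U) (X : Set L.Sentence)
    (h : EffEssHerXCreative g U X) : StrongDoublyXGenerative g U X := by
  obtain ⟨Φ, hΦ, H⟩ := h
  obtain ⟨u, hu⟩ := hU
  obtain ⟨r, hr'⟩ := ce_preimage g.neg_comp (g.thmIdx u)
  have hthyu : g.thy u = U := by
    ext φ
    rw [mem_thy, ← hu, mem_codes]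
    simp
  have hr : ∀ n, n ∈ WSet r ↔ Prv U ∼(g.equiv.symm n) := by
    intro n
    have e : WSet (g.thmIdx u) = g.codes (Thms (g.thy u)) := g.thmIdx_spec u
    rw [hr', e, hthyu, Set.mem_preimage, mem_codes]
    simp [Thms]
  obtain ⟨s, hs, Hs⟩ := smn_q
  obtain ⟨b, hb, Hb⟩ := smn_union r
  obtain ⟨k, hk, Hk⟩ := smn_union u
  let F : Code → ℕ →. ℕ := fun c x =>
    Φ (s (c, x, x.unpair.1), b (s (c, x, x.unpair.2)), k (s (c, x, x.unpair.1)))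
  have hF : Partrec₂ F := by
    have h1 : Computable fun p : Code × ℕ => s (p.1, p.2, p.2.unpair.1) :=
      hs.comp (Computable.pair Computable.fst (Computable.pair Computable.snd
        (Computable.fst.comp (Computable.unpair.comp Computable.snd))))
    have h2 : Computable fun p : Code × ℕ => s (p.1, p.2, p.2.unpair.2) :=
      hs.comp (Computable.pair Computable.fst (Computable.pair Computable.snd
        (Computable.snd.comp (Computable.unpair.comp Computable.snd))))
    exact hΦ.comp (Computable.pair h1 (Computable.pair (hb.comp h2) (hk.comp h1)))
  obtain ⟨c, hc⟩ := Code.fixed_point₂ hF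
  -- Key facts about a run
  have key : ∀ i j : ℕ,
      let x := Nat.pair i j
      (∀ ψ, Prv {ψ' | g.equiv ψ' ∈ Code.eval c x ∧ g.equiv ψ' ∈ WSet i} ψ →
        ¬ (Prv U ∼ψ ∨ (g.equiv ψ ∈ Code.eval c x ∧ g.equiv ψ ∈ WSet j))) →
      Consistent (U ∪ {ψ' | g.equiv ψ' ∈ Code.eval c x ∧ g.equiv ψ' ∈ WSet i}) →
      ∃ n ∈ Code.eval c x, g.equiv.symm n ∈ X ∧
        ¬ Prv {ψ' | g.equiv ψ' ∈ Code.eval c x ∧ g.equiv ψ' ∈ WSet i} (g.equiv.symm n) ∧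
        ¬ Prv U ∼(g.equiv.symm n) ∧ ¬ (n ∈ Code.eval c x ∧ n ∈ WSet j) := by
    intro i j x hd hcons
    have e1 : g.thy (s (c, x, i)) =
        {ψ' | g.equiv ψ' ∈ Code.eval c x ∧ g.equiv ψ' ∈ WSet i} := by
      ext φ; rw [mem_thy, Hs]; rfl
    have e2 : g.thy (k (s (c, x, i))) =
        U ∪ {ψ' | g.equiv ψ' ∈ Code.eval c x ∧ g.equiv ψ' ∈ WSet i} := by
      ext φ; rw [mem_thy, Hk, Set.mem_union, ← mem_thy, ← mem_thy, hthyu, e1]; rfl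
    have e3 : ∀ n, n ∈ WSet (b (s (c, x, j))) ↔
        (Prv U ∼(g.equiv.symm n) ∨ (n ∈ Code.eval c x ∧ n ∈ WSet j)) := by
      intro n; rw [Hb, Set.mem_union, hr, Hs]; rfl
    obtain ⟨n, hn, hX, hn'⟩ := H (s (c, x, i)) (b (s (c, x, j))) (k (s (c, x, i)))
      (by
        rw [e2]
        exact fun φ hφ => Prv.mono (fun ψ hψ => prv_mem (Or.inl hψ)) hφ)
      (by rw [e2]; exact hcons)
      (by
        rw [e1, e2]
        exact fun φ hφ => Prv.mono (fun ψ hψ => prv_mem (Or.inr hψ)) hφ)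
      (by
        rw [Set.eq_empty_iff_forall_notMem]
        rintro n ⟨h1, h2⟩
        rw [mem_codes, e1] at h1
        refine hd _ h1 ?_
        simpa using (e3 n).1 h2)
    have hn2 : n ∈ Code.eval c x := by
      rw [hc]
      simpa [F, x] using hn
    rw [Set.mem_union, e3, mem_codes, e1] at hn'
    push Not at hn'
    exact ⟨n, hn2, (mem_codes g).1 hX, hn'.1, hn'.2.1, fun hh => hn'.2.2 hh.1 hh.2⟩
  have noself : ∀ ψ, Prv (∅ : L.Theory) ψ → ¬ Prv U ∼ψ := fun ψ h1 h2 =>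
    hcon (prv_bot (Prv.mono (by simp) h1) h2)
  have total : ∀ x, (Code.eval c x).Dom := by
    intro x
    by_contra hx
    have hx' : ∀ n, n ∉ Code.eval c x := fun n hn => hx (Part.dom_iff_mem.2 ⟨n, hn⟩)
    have kk := key x.unpair.1 x.unpair.2
    simp only [Nat.pair_unpair] at kk
    simp only [hx', false_and, Set.ofPred_false, or_false, Set.union_empty] at kk
    obtain ⟨n, hn, _⟩ := kk (fun ψ h => noself ψ h) hcon
  refine ⟨fun i j => (Code.eval c (Nat.pair i j)).get (total _), ?_, ?_⟩
  · have hp : Partrec fun p : ℕ × ℕ => Code.eval c (Nat.pair p.1 p.2) :=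
      Code.eval_part.comp (Computable.const c)
        (Primrec₂.natPair.to_comp.comp Computable.fst Computable.snd)
    exact hp.of_eq fun p => by simp
  · intro i j hij
    have kk := key i j
    have hget := Part.get_mem (total (Nat.pair i j))
    dsimp only
    generalize (Code.eval c (Nat.pair i j)).get (total (Nat.pair i j)) = n at hget ⊢
    have huniq : ∀ m, m ∈ Code.eval c (Nat.pair i j) ↔ m = n := fun m =>
      ⟨fun hm => Part.mem_unique hm hget, fun hm => hm ▸ hget⟩
    simp only [huniq, exists_eq_left] at kk
    have hdis : n ∈ WSet i → n ∉ WSet j := fun h1 h2 =>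
      Set.notMem_empty n (hij ▸ ⟨h1, h2⟩)
    simp only [mem_codes]
    change (Prv ∅ _ ↔ _) ∧ (Prv U ∼_ ↔ _) ∧ _
    have hI : n ∈ WSet i → Prv U ∼(g.equiv.symm n) := by
      intro hi
      by_contra hno
      have hc2 : Consistent
          (U ∪ {ψ' | g.equiv ψ' = n ∧ g.equiv ψ' ∈ WSet i}) := by
        intro hbot
        refine hno (prv_not hbot ?_)
        rintro ψ (h1 | h1)
        · exact Or.inl h1
        · exact Or.inr (by rw [← h1.1]; simp)
      obtain ⟨-, h2, -⟩ := kk (by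
        intro ψ hψ hor
        have hψ2 : Prv (U ∪ {ψ' | g.equiv ψ' = n ∧ g.equiv ψ' ∈ WSet i}) ψ :=
          Prv.mono (fun χ hχ => prv_mem (Or.inr hχ)) hψ
        rcases hor with h1 | ⟨h1, h2⟩
        · exact hc2 (prv_bot hψ2 (Prv.mono (fun χ hχ => prv_mem (Or.inl hχ)) h1))
        · exact hdis hi (h1 ▸ h2)) hc2
      exact h2 (prv_mem ⟨by simp, by simpa using hi⟩)
    have emp : n ∉ WSet i → {ψ' : L.Sentence | g.equiv ψ' = n ∧ g.equiv ψ' ∈ WSet i} = ∅ := by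
      intro hi
      rw [Set.eq_empty_iff_forall_notMem]
      rintro ψ ⟨h1, h2⟩
      exact hi (h1 ▸ h2)
    have hJ : n ∈ WSet j → Prv ∅ (g.equiv.symm n) := by
      intro hj
      by_contra hno
      have hi : n ∉ WSet i := fun hi => hdis hi hj
      rw [emp hi, Set.union_empty] at kk
      obtain ⟨-, -, -, h4⟩ := kk (by
        rintro ψ hψ (h1 | ⟨h1, -⟩)
        · exact noself ψ hψ h1
        · refine hno ?_
          rw [← h1]; simpa using hψ) hcon
      exact h4 ⟨trivial, hj⟩
    have hN : n ∉ WSet i → n ∉ WSet j → g.equiv.symm n ∈ X ∧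
        ¬ Prv ∅ (g.equiv.symm n) ∧ ¬ Prv U ∼(g.equiv.symm n) := by
      intro hi hj
      rw [emp hi, Set.union_empty] at kk
      obtain ⟨h1, h2, h3, -⟩ := kk (by
        rintro ψ hψ (h1 | ⟨h1, h2⟩)
        · exact noself ψ hψ h1
        · exact hj (h1 ▸ h2)) hcon
      exact ⟨h1, h2, h3⟩
    refine ⟨⟨fun h1 => ?_, hJ⟩, ⟨fun h1 => ?_, hI⟩, fun h1 => ?_⟩
    · by_contra hj
      by_cases hi : n ∈ WSet i
      · exact noself _ h1 (hI hi)
      · exact (hN hi hj).2.1 h1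
    · by_contra hi
      by_cases hj : n ∈ WSet j
      · exact noself _ (hJ hj) h1
      · exact (hN hi hj).2.2 h1
    · exact (hN (fun h => h1 (Or.inl h)) (fun h => h1 (Or.inr h))).1

end Helpers

/-- A consistent c.e. theory `U` is strongly doubly
`X`-generative iff it is effectively essentially hereditarily `X`-creative. -/
theorem statement17 {L : FirstOrder.Language} (g : Numbering L) (U : L.Theory)
    (hU : g.CEThy U) (hcon : Consistent U) (X : Set L.Sentence) :
    StrongDoublyXGenerative g U X ↔ EffEssHerXCreative g U X :=
  ⟨gen_to_creative g U X, creative_to_gen g U hU hcon X⟩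

end PourEl
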